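/- arXiv:1807.07267 — 2 statements merged into one kernel-verified Lean document; each statement's English description precedes it below -/
import Mathlib

section
/- Smallness of the set of velocity cycles not reaching far back in time (Lemma 2.6). Let Ω be a bounded domain as specified and T > 0. For all sufficiently large n there exist constants Ĉ₁ and Ĉ₂, independent of n, such that with k = ⌈Ĉ₁ (nT)^{5/4}⌉ the following holds: for every (t,x,v) ∈ [0,T] × cl(Ω) × ℝ³, the iterated integral over (v₁,…,v_{k−1}) ∈ Π_{j=1}^{k−1} V_j of the indicator function 1_{{t_k > −nT}} with respect to the product measure Π_{j=1}^{k−1} dσ_j satisfies ∫_{Π_{j=1}^{k−1} V_j} 1_{{t_k > −nT}} Π_{j=1}^{k−1} dσ_j ≤ (1/2)^{Ĉ₂ (nT)^{5/4}}. -/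
/-!
The proof is an exponential Markov inequality. Since `1_{t_k > -M} ≤ e^{M + t_k}`, it suffices to
bound the iterated integral of `e^{t_k}`. Between two reflections the particle spends at least the
time `c (n·u)/|u|²` inside `Ω` (`BDomain.exists_exitT_ge`, from a Lipschitz bound on `Dξ` and a
lower bound on `|∇ξ|` along the boundary), so integrating out one velocity `u` costs the factor
`∫ exp(-c (n·u)/|u|²) dσ(u)`. The measures `dσ` at different boundary points are rotations of each
other and have total mass `1`, hence this factor is at most a constant `ρ < 1` depending only on
`Ω` (`exists_laplace_factor`).

With `M = nT`, `t ≤ T` and `k - 1` integrations the bound is `e^{nT + T} ρ^{k-1}`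
(`exists_cycInt_le`). When `k` is of order `(nT)^{5/4}` the decay of `ρ^{k-1}` beats the linear
exponent `nT + T` for large `n`, which gives the claim already with `C₁ = 1`.
-/

noncomputable section

open MeasureTheory Real Set
open scoped ENNReal RealInnerProductSpace

/-- The velocity/position space `ℝ³`. -/
abbrev V3 : Type := EuclideanSpace ℝ (Fin 3)

/-- The normalized global Maxwellian `μ(v) = (2π)⁻¹ e^{-|v|²/2}`. -/
def gm (v : V3) : ℝ := (2 * π)⁻¹ * Real.exp (-‖v‖ ^ 2 / 2)

/-- The boundary Maxwellian `μ_θ(v) = (2πθ²)⁻¹ e^{-|v|²/(2θ)}` at temperature `θ`. -/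
def gmθ (θ : ℝ) (v : V3) : ℝ := (2 * π * θ ^ 2)⁻¹ * Real.exp (-‖v‖ ^ 2 / (2 * θ))

/-- The velocity weight `w_{q,β}(v) = (1+|v|²)^{β/2} e^{q|v|²}`. -/
def wgt (q β : ℝ) (v : V3) : ℝ := (1 + ‖v‖ ^ 2) ^ (β / 2) * Real.exp (q * ‖v‖ ^ 2)

/-- The unit sphere `S²`. -/
abbrev Sph : Type := Metric.sphere (0 : V3) 1

/-- The surface measure on the unit sphere. -/
def sphM : Measure Sph := (volume : Measure V3).toSphere

/-- Post-collisional velocity `v' = v - [(v-u)·ω] ω`. -/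
def vpost (v u : V3) (ω : Sph) : V3 := v - ⟪v - u, (ω : V3)⟫ • (ω : V3)

/-- Post-collisional velocity `u' = u + [(v-u)·ω] ω`. -/
def upost (v u : V3) (ω : Sph) : V3 := u + ⟪v - u, (ω : V3)⟫ • (ω : V3)

/-- The collision kernel `B(z,ω) = |z|^γ b(cos φ)`, `cos φ = z·ω/|z|`. -/
def Bker (γ : ℝ) (b : ℝ → ℝ) (z : V3) (ω : Sph) : ℝ :=
  ‖z‖ ^ γ * b (⟪z, (ω : V3)⟫ / ‖z‖)

/-- Admissible angular kernel: measurable with `0 ≤ b(s) ≤ C|s|`. -/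
def KernelOK (b : ℝ → ℝ) : Prop :=
  Measurable b ∧ ∃ Cb : ℝ, ∀ s, 0 ≤ b s ∧ b s ≤ Cb * |s|

/-- The Boltzmann collision operator `Q(G,F)`. -/
def Qop (γ : ℝ) (b : ℝ → ℝ) (G F : V3 → ℝ) (v : V3) : ℝ :=
  ∫ u : V3, ∫ ω : Sph,
    Bker γ b (v - u) ω * (G (upost v u ω) * F (vpost v u ω) - G u * F v) ∂sphM

/-- The collision frequency `ν(v) = ∫∫ B(v-u,ω) μ(u) dω du`. -/
def nufreq (γ : ℝ) (b : ℝ → ℝ) (v : V3) : ℝ :=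
  ∫ u : V3, ∫ ω : Sph, Bker γ b (v - u) ω * gm u ∂sphM

/-- The operator `K = K₂ - K₁` with a radial cutoff `χ(|v-u|)` inserted
(`χ ≡ 1` recovers `K` itself). -/
def Kcut (γ : ℝ) (b χ : ℝ → ℝ) (f : V3 → ℝ) (v : V3) : ℝ :=
  ∫ u : V3, ∫ ω : Sph, Bker γ b (v - u) ω * χ ‖v - u‖ *
    (Real.sqrt (gm u * gm (upost v u ω)) * f (vpost v u ω)
      + Real.sqrt (gm u * gm (vpost v u ω)) * f (upost v u ω)
      - Real.sqrt (gm v * gm u) * f u) ∂sphM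

/-- The integral operator `K = K₂ - K₁`. -/
def Kop (γ : ℝ) (b : ℝ → ℝ) (f : V3 → ℝ) : V3 → ℝ := Kcut γ b (fun _ => 1) f

/-- The linearized collision operator `L f = -μ^{-1/2}[Q(μ, √μ f) + Q(√μ f, μ)]`. -/
def Lop (γ : ℝ) (b : ℝ → ℝ) (f : V3 → ℝ) (v : V3) : ℝ :=
  -(Real.sqrt (gm v))⁻¹ *
    (Qop γ b gm (fun u => Real.sqrt (gm u) * f u) v
      + Qop γ b (fun u => Real.sqrt (gm u) * f u) gm v)

/-- The nonlinear collision term `Γ(f,g) = μ^{-1/2} Q(√μ f, √μ g)`. -/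
def Γop (γ : ℝ) (b : ℝ → ℝ) (f g : V3 → ℝ) (v : V3) : ℝ :=
  (Real.sqrt (gm v))⁻¹ *
    Qop γ b (fun u => Real.sqrt (gm u) * f u) (fun u => Real.sqrt (gm u) * g u) v

/-- The collision frequency is comparable to `(1+|v|)^γ`. -/
def NuComparable (γ : ℝ) (b : ℝ → ℝ) : Prop :=
  ∃ c₁ > (0:ℝ), ∃ c₂ > (0:ℝ), ∀ v : V3,
    c₁ * (1 + ‖v‖) ^ γ ≤ nufreq γ b v ∧ nufreq γ b v ≤ c₂ * (1 + ‖v‖) ^ γ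

/-- A bounded connected smooth domain `Ω = {ξ < 0}` in `ℝ³`. -/
structure BDomain where
  ξ : V3 → ℝ
  smooth : ContDiff ℝ (⊤ : ℕ∞) ξ
  grad_ne : ∀ x, ξ x = 0 → gradient ξ x ≠ 0
  bounded : Bornology.IsBounded {x : V3 | ξ x < 0}
  connected : IsConnected {x : V3 | ξ x < 0}

namespace BDomain

/-- The open domain `Ω`. -/
def dom (D : BDomain) : Set V3 := {x | D.ξ x < 0}

/-- The boundary `∂Ω = {ξ = 0}`. -/
def bdry (D : BDomain) : Set V3 := {x | D.ξ x = 0}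

/-- The outward unit normal `n(x) = ∇ξ(x)/|∇ξ(x)|`. -/
def nrm (D : BDomain) (x : V3) : V3 := ‖gradient D.ξ x‖⁻¹ • gradient D.ξ x

/-- Convexity of the domain: `∂²ξ ≥ c_ξ |ζ|²`. -/
def IsConvexDom (D : BDomain) : Prop :=
  ∃ cξ > (0:ℝ), ∀ x : V3, D.ξ x ≤ 0 → ∀ ζ : V3,
    cξ * ‖ζ‖ ^ 2 ≤ iteratedFDeriv ℝ 2 D.ξ x ![ζ, ζ]

/-- The backward exit time `t_b(x,v)`. -/
def exitT (D : BDomain) (x v : V3) : ℝ :=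
  sInf {τ : ℝ | 0 ≤ τ ∧ x - τ • v ∉ closure D.dom}

/-- The grazing set `γ₀ ⊆ ∂Ω × ℝ³`. -/
def grazing (D : BDomain) : Set (V3 × V3) :=
  {p | p.1 ∈ D.bdry ∧ ⟪D.nrm p.1, p.2⟫ = 0}

end BDomain

/-- `L^∞(Ω×ℝ³)` sup (as an extended real). -/
def nInt (D : BDomain) (h : V3 → V3 → ℝ) : ℝ≥0∞ :=
  ⨆ x ∈ D.dom, ⨆ v : V3, ENNReal.ofReal |h x v|

/-- `L^∞(γ)` sup over the whole phase boundary. -/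
def nBdry (D : BDomain) (h : V3 → V3 → ℝ) : ℝ≥0∞ :=
  ⨆ x ∈ D.bdry, ⨆ v : V3, ENNReal.ofReal |h x v|

/-- `L^∞(γ₋)` sup over the incoming phase boundary. -/
def nBdryIn (D : BDomain) (h : V3 → V3 → ℝ) : ℝ≥0∞ :=
  ⨆ x ∈ D.bdry, ⨆ v ∈ {v : V3 | ⟪D.nrm x, v⟫ < 0}, ENNReal.ofReal |h x v|

/-- The diffuse-reflection boundary operator
`P_γ f (x,v) = √μ(v) ∫_{u·n(x)>0} f(u) √μ(u) |u·n(x)| du`. -/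
def Pbd (D : BDomain) (f : V3 → ℝ) (x v : V3) : ℝ :=
  Real.sqrt (gm v) *
    ∫ u in {u : V3 | 0 < ⟪D.nrm x, u⟫}, f u * Real.sqrt (gm u) * |⟪D.nrm x, u⟫|

/-- The diffuse-reflection boundary value at temperature `θv`:
`μ_{θv}(v) ∫_{u·n(x)>0} F(u) |u·n(x)| du`. -/
def diffuseBC (D : BDomain) (θv : ℝ) (F : V3 → ℝ) (x v : V3) : ℝ :=
  gmθ θv v * ∫ u in {u : V3 | 0 < ⟪D.nrm x, u⟫}, F u * |⟪D.nrm x, u⟫|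

/-- Mild solution (for all times `t ∈ ℝ`) of
`∂ₜ f + v·∇ₓ f + σ(v) f = g` with prescribed incoming boundary value `bc`:
the Duhamel integral form along characteristics, backward to the first exit time. -/
def IsMildSol (D : BDomain) (σ : V3 → ℝ) (g bc f : ℝ → V3 → V3 → ℝ) : Prop :=
  (∀ t : ℝ, ∀ x ∈ closure D.dom, ∀ v : V3, v ≠ 0 →
      (x ∈ D.bdry → 0 < ⟪D.nrm x, v⟫) →
      f t x v =
        Real.exp (-σ v * D.exitT x v) *
            bc (t - D.exitT x v) (x - D.exitT x v • v) v
          + ∫ τ in Set.Ioc (t - D.exitT x v) t,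
              Real.exp (-σ v * (t - τ)) * g τ (x - (t - τ) • v) v) ∧
  (∀ t : ℝ, ∀ x ∈ D.bdry, ∀ v : V3, ⟪D.nrm x, v⟫ < 0 → f t x v = bc t x v)

/-- Mild solution on `t ≥ 0` of the initial-boundary value problem
`∂ₜ f + v·∇ₓ f + σ(v) f = g`, `f|_{γ₋} = bc`, `f(0) = f0`. -/
def IsMildSolIVP (D : BDomain) (σ : V3 → ℝ) (g bc : ℝ → V3 → V3 → ℝ)
    (f0 : V3 → V3 → ℝ) (f : ℝ → V3 → V3 → ℝ) : Prop :=
  (∀ t : ℝ, 0 ≤ t → ∀ x ∈ closure D.dom, ∀ v : V3, v ≠ 0 →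
      (x ∈ D.bdry → 0 < ⟪D.nrm x, v⟫) →
      f t x v =
        (if D.exitT x v ≤ t then
            Real.exp (-σ v * D.exitT x v) *
              bc (t - D.exitT x v) (x - D.exitT x v • v) v
          else Real.exp (-σ v * t) * f0 (x - t • v) v)
          + ∫ τ in Set.Ioc (max (t - D.exitT x v) 0) t,
              Real.exp (-σ v * (t - τ)) * g τ (x - (t - τ) • v) v) ∧
  (∀ t : ℝ, 0 ≤ t → ∀ x ∈ D.bdry, ∀ v : V3, ⟪D.nrm x, v⟫ < 0 → f t x v = bc t x v) ∧
  (∀ x ∈ closure D.dom, ∀ v : V3, f 0 x v = f0 x v)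

/-- `L²([0,T]; L²(Ω×ℝ³))` norm (as an extended real). -/
def L2T (D : BDomain) (T : ℝ) (h : ℝ → V3 → V3 → ℝ) : ℝ≥0∞ :=
  (∫⁻ t in Set.Icc (0:ℝ) T, ∫⁻ x in D.dom, ∫⁻ v : V3,
      ENNReal.ofReal (h t x v ^ 2)) ^ (1/2 : ℝ)

/-- A smooth cutoff `χ_m`: `χ ≡ 1` on `[0,m]`, `χ ≡ 0` on `[2m,∞)`, `0 ≤ χ ≤ 1`. -/
def IsCutoff (m : ℝ) (χ : ℝ → ℝ) : Prop :=
  ContDiff ℝ (⊤ : ℕ∞) χ ∧ (∀ s, χ s ∈ Set.Icc (0:ℝ) 1) ∧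
    (∀ s ≤ m, χ s = 1) ∧ ∀ s, 2 * m ≤ s → χ s = 0

/-- The probability measure `dσ = μ(u)|u·n(x₁)| du` on `{u : u·n(x₁) > 0}`. -/
def sigmaM (D : BDomain) (x₁ : V3) : Measure V3 :=
  ((volume : Measure V3).restrict {u : V3 | 0 < ⟪D.nrm x₁, u⟫}).withDensity
    fun u => ENNReal.ofReal (gm u * |⟪D.nrm x₁, u⟫|)

/-- Iterated integral along back-time cycles: starting from the state `s = (t_j, x_j, v_j)`,
integrate over the next `j` reflected velocities `v_{j+1} ∈ V_{j+1}, …` with respect to the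
measures `dσ`, applying `F` to the final state. -/
def cycInt (D : BDomain) (F : ℝ × V3 × V3 → ℝ≥0∞) : ℕ → ℝ × V3 × V3 → ℝ≥0∞
  | 0, s => F s
  | j + 1, s =>
      ∫⁻ u, cycInt D F j
          (s.1 - D.exitT s.2.1 s.2.2, s.2.1 - D.exitT s.2.1 s.2.2 • s.2.2, u)
        ∂(sigmaM D (s.2.1 - D.exitT s.2.1 s.2.2 • s.2.2))

/-! ### One reflection: the rotation-invariant flux average -/

/-- Rotation invariance of Lebesgue measure: an orthonormal basis whose first vector is `n` turns
`n·u` into the first coordinate. -/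
lemma lintegral_inner_norm (n : V3) (hn : ‖n‖ = 1) (Φ : ℝ → ℝ → ℝ≥0∞) :
    ∫⁻ u : V3, Φ ⟪n, u⟫ ‖u‖ = ∫⁻ w : V3, Φ (w 0) ‖w‖ := by
  have ho : Orthonormal ℝ (({0} : Set (Fin 3)).domRestrict (fun _ : Fin 3 => n)) := by
    refine ⟨fun i => hn, ?_⟩
    intro i j hij
    exact absurd (Subsingleton.elim i j) hij
  obtain ⟨b, hb⟩ := ho.exists_orthonormalBasis_extension_of_card_eq (by simp)
  have hb0 : b 0 = n := hb 0 rfl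
  rw [← (b.measurePreserving_repr).lintegral_comp_emb
    b.repr.toHomeomorph.measurableEmbedding (fun w : V3 => Φ (w 0) ‖w‖)]
  refine lintegral_congr fun u => ?_
  rw [b.repr_apply_apply, hb0, LinearIsometryEquiv.norm_map]

/-- The one-dimensional factors of the outgoing flux density:
`μ(w) w₀ 1_{w₀ > 0} = (2π)⁻¹ ∏ᵢ fluxFactor i wᵢ`. -/
def fluxFactor (i : Fin 3) (x : ℝ) : ℝ :=
  if i = 0 then (Ioi (0 : ℝ)).indicator (fun y => y * Real.exp (-(1 / 2) * y ^ 2)) x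
  else Real.exp (-(1 / 2) * x ^ 2)

lemma integral_fluxFactor_zero : ∫ x, fluxFactor 0 x = 1 := by
  have h := integral_rpow_mul_exp_neg_mul_rpow (p := 2) (q := 1) (b := 1 / 2)
    (by norm_num) (by norm_num) (by norm_num)
  simp only [fluxFactor, if_true]
  rw [integral_indicator measurableSet_Ioi]
  norm_num at h
  simpa using h

lemma integral_fluxFactor_ne {i : Fin 3} (hi : i ≠ 0) :
    ∫ x, fluxFactor i x = Real.sqrt (2 * π) := by
  simp only [fluxFactor, hi, if_false]
  rw [integral_gaussian]
  congr 1
  field_simp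

lemma integrable_fluxFactor (i : Fin 3) : Integrable (fluxFactor i) := by
  unfold fluxFactor
  split_ifs
  · exact (integrable_mul_exp_neg_mul_sq (by norm_num)).indicator measurableSet_Ioi
  · exact integrable_exp_neg_mul_sq (by norm_num)

lemma fluxFactor_nonneg (i : Fin 3) (x : ℝ) : 0 ≤ fluxFactor i x := by
  unfold fluxFactor
  split_ifs
  · refine indicator_nonneg (fun y hy => ?_) x
    have : (0 : ℝ) < y := hy
    positivity
  · positivity

/-- The measure `dσ` has total mass one, stated for the normal `e₀`. -/
lemma setLIntegral_flux_eq_one :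
    ∫⁻ w in {w : V3 | 0 < w 0}, ENNReal.ofReal (gm w * |w 0|) = 1 := by
  have hs : MeasurableSet {w : V3 | 0 < w 0} :=
    measurableSet_lt measurable_const (by fun_prop)
  rw [← lintegral_indicator hs]
  have key : ∀ w : V3, {w : V3 | 0 < w 0}.indicator
      (fun w => ENNReal.ofReal (gm w * |w 0|)) w
      = ENNReal.ofReal ((2 * π)⁻¹ * ∏ i, fluxFactor i (w.ofLp i)) := by
    intro w
    by_cases hw : 0 < w 0
    · rw [indicator_of_mem (by exact hw)]
      congr 1
      simp only [gm, fluxFactor, Fin.prod_univ_three, EuclideanSpace.norm_sq_eq,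
        Fin.sum_univ_three, Real.norm_eq_abs, sq_abs, if_true]
      rw [indicator_of_mem (by exact hw), abs_of_pos hw]
      simp only [Fin.reduceEq, if_false]
      rw [show -((w 0) ^ 2 + (w 1) ^ 2 + (w 2) ^ 2) / 2
        = -(1 / 2) * (w 0) ^ 2 + -(1 / 2) * (w 1) ^ 2 + -(1 / 2) * (w 2) ^ 2 by ring,
        Real.exp_add, Real.exp_add]
      ring
    · rw [indicator_of_notMem (by exact hw)]
      have : fluxFactor 0 (w.ofLp 0) = 0 := by
        simp only [fluxFactor, if_true]
        exact indicator_of_notMem (by exact hw) _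
      simp [Fin.prod_univ_three, this]
  rw [lintegral_congr key]
  have hmp := PiLp.volume_preserving_ofLp (ι := Fin 3)
  rw [hmp.lintegral_comp_emb (MeasurableEquiv.toLp 2 (Fin 3 → ℝ)).symm.measurableEmbedding
    (fun w : Fin 3 → ℝ => ENNReal.ofReal ((2 * π)⁻¹ * ∏ i, fluxFactor i (w i)))]
  rw [← ofReal_integral_eq_lintegral_ofReal]
  · rw [integral_const_mul, integral_fintype_prod_volume_eq_prod, Fin.prod_univ_three,
      integral_fluxFactor_zero, integral_fluxFactor_ne (by decide),
      integral_fluxFactor_ne (by decide), one_mul,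
      Real.mul_self_sqrt (by positivity), inv_mul_cancel₀ (by positivity), ENNReal.ofReal_one]
  · exact (Integrable.fintype_prod integrable_fluxFactor).const_mul _
  · refine Filter.Eventually.of_forall fun w => ?_
    have := Finset.prod_nonneg (fun i (_ : i ∈ Finset.univ) => fluxFactor_nonneg i (w i))
    simp only [Pi.zero_apply]
    positivity

/-- The Laplace factor gained at one reflection: the `dσ`-average of `exp(-c (n·u)/|u|²)` is the
same for all unit normals `n`, hence is bounded by some `ρ < 1` uniformly in `n`. -/
lemma exists_laplace_factor (c : ℝ) (hc : 0 < c) :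
    ∃ ρ : ℝ, 0 < ρ ∧ ρ < 1 ∧ ∀ n : V3, ‖n‖ = 1 →
      ∫⁻ u in {u : V3 | 0 < ⟪n, u⟫}, ENNReal.ofReal (gm u * |⟪n, u⟫|) *
        ENNReal.ofReal (Real.exp (-(c * ⟪n, u⟫ / ‖u‖ ^ 2))) ≤ ENNReal.ofReal ρ := by
  set I : ℝ≥0∞ := ∫⁻ w in {w : V3 | 0 < w 0}, ENNReal.ofReal (gm w * |w 0|) *
    ENNReal.ofReal (Real.exp (-(c * w 0 / ‖w‖ ^ 2))) with hI
  have hs : MeasurableSet {w : V3 | 0 < w 0} :=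
    measurableSet_lt measurable_const (by fun_prop)
  have hgm : Measurable gm := by unfold gm; fun_prop
  have hgpos : ∀ w : V3, 0 < gm w := fun w => by unfold gm; positivity
  have hle : ∀ w ∈ {w : V3 | 0 < w 0}, ENNReal.ofReal (gm w * |w 0|) *
      ENNReal.ofReal (Real.exp (-(c * w 0 / ‖w‖ ^ 2))) < ENNReal.ofReal (gm w * |w 0|) := by
    intro w hw
    have hw0 : 0 < w 0 := hw
    have hwn : w ≠ 0 := by
      rintro rfl
      simp at hw0
    have hwn' : 0 < ‖w‖ := norm_pos_iff.mpr hwn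
    have hp : 0 < gm w * |w 0| := mul_pos (hgpos w) (abs_pos.mpr hw0.ne')
    rw [← ENNReal.ofReal_mul hp.le]
    refine (ENNReal.ofReal_lt_ofReal_iff hp).mpr ?_
    refine mul_lt_of_lt_one_right hp (Real.exp_zero ▸ Real.exp_lt_exp.mpr ?_)
    have : 0 < c * w 0 / ‖w‖ ^ 2 := by positivity
    linarith
  have hI1 : I < 1 := by
    rw [← setLIntegral_flux_eq_one]
    refine setLIntegral_strict_mono hs ?_ (by fun_prop) ?_ (Filter.Eventually.of_forall hle)
    · refine (IsOpen.measure_pos _ (isOpen_lt continuous_const (by fun_prop)) ?_).ne'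
      exact ⟨EuclideanSpace.single 0 1, by simp⟩
    · refine ne_top_of_le_ne_top ENNReal.one_ne_top ?_
      rw [← setLIntegral_flux_eq_one]
      exact setLIntegral_mono' hs fun w hw => (hle w hw).le
  have hIt : I ≠ ∞ := hI1.ne_top
  refine ⟨max I.toReal (1 / 2), by positivity, max_lt ?_ (by norm_num), fun n hn => ?_⟩
  · rw [← ENNReal.toReal_one]
    exact (ENNReal.toReal_lt_toReal hIt ENNReal.one_ne_top).mpr hI1
  · refine le_trans (le_of_eq ?_) ((ENNReal.ofReal_toReal hIt).symm.le.trans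
      (ENNReal.ofReal_le_ofReal (le_max_left _ _)))
    have hs' : MeasurableSet {u : V3 | 0 < ⟪n, u⟫} :=
      measurableSet_lt measurable_const (by fun_prop)
    rw [hI, ← lintegral_indicator hs, ← lintegral_indicator hs']
    let Φ : ℝ → ℝ → ℝ≥0∞ := fun a r => (Ioi (0 : ℝ)).indicator (fun a =>
      ENNReal.ofReal ((2 * π)⁻¹ * Real.exp (-r ^ 2 / 2) * |a|) *
        ENNReal.ofReal (Real.exp (-(c * a / r ^ 2)))) a
    exact lintegral_inner_norm n hn Φ

/-! ### Geometry of the backward exit -/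

namespace BDomain

lemma continuous_ξ (D : BDomain) : Continuous D.ξ := D.smooth.continuous

lemma isOpen_dom (D : BDomain) : IsOpen D.dom :=
  isOpen_lt D.continuous_ξ continuous_const

lemma ξ_nonpos_of_mem_closure (D : BDomain) {x : V3} (hx : x ∈ closure D.dom) : D.ξ x ≤ 0 := by
  have : closure D.dom ⊆ {x | D.ξ x ≤ 0} :=
    closure_minimal (fun y (hy : D.ξ y < 0) => (hy.le : D.ξ y ≤ 0)) (isClosed_le D.continuous_ξ continuous_const)
  exact this hx

/-- Boundedness of the domain: a nonzero velocity leaves it, so the infimum defining `exitT` is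
taken over a nonempty set. -/
lemma exit_nonempty (D : BDomain) (x : V3) {v : V3} (hv : v ≠ 0) :
    {τ : ℝ | 0 ≤ τ ∧ x - τ • v ∉ closure D.dom}.Nonempty := by
  obtain ⟨R, hR⟩ := D.bounded.closure.exists_norm_le
  have hv' : 0 < ‖v‖ := norm_pos_iff.mpr hv
  refine ⟨(|R| + ‖x‖ + 1) / ‖v‖, by positivity, fun h => ?_⟩
  have h1 := hR _ h
  have h2 : ‖((|R| + ‖x‖ + 1) / ‖v‖) • v‖ = |R| + ‖x‖ + 1 := by
    rw [norm_smul, Real.norm_of_nonneg (by positivity)]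
    field_simp
  have h3 := norm_sub_norm_le (((|R| + ‖x‖ + 1) / ‖v‖) • v) x
  rw [norm_sub_rev, h2] at h3
  have := le_abs_self R
  linarith

lemma exit_bddBelow (D : BDomain) (x v : V3) :
    BddBelow {τ : ℝ | 0 ≤ τ ∧ x - τ • v ∉ closure D.dom} := ⟨0, fun _ h => h.1⟩

lemma exitT_nonneg (D : BDomain) (x v : V3) : 0 ≤ D.exitT x v :=
  Real.sInf_nonneg fun _ h => h.1

lemma mem_closure_of_lt_exitT (D : BDomain) {x v : V3} {s : ℝ} (hs : 0 ≤ s)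
    (h : s < D.exitT x v) : x - s • v ∈ closure D.dom := by
  by_contra hc
  exact absurd (csInf_le (D.exit_bddBelow x v) ⟨hs, hc⟩) (not_le.mpr h)

lemma exit_mem_closure (D : BDomain) {x v : V3} (hx : x ∈ closure D.dom) :
    x - D.exitT x v • v ∈ closure D.dom := by
  rcases (D.exitT_nonneg x v).eq_or_lt with h | h
  · rw [← h]; simpa using hx
  · have hc : Continuous fun s : ℝ => x - s • v := by fun_prop
    have hcl : IsClosed ((fun s : ℝ => x - s • v) ⁻¹' closure D.dom) :=
      isClosed_closure.preimage hc
    have hsub : Ico 0 (D.exitT x v) ⊆ (fun s : ℝ => x - s • v) ⁻¹' closure D.dom :=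
      fun s hs => D.mem_closure_of_lt_exitT hs.1 hs.2
    have := closure_minimal hsub hcl
    rw [closure_Ico h.ne] at this
    exact this ⟨h.le, le_rfl⟩

lemma exit_mem_bdry (D : BDomain) {x v : V3} (hx : x ∈ closure D.dom) (hv : v ≠ 0) :
    x - D.exitT x v • v ∈ D.bdry := by
  refine le_antisymm (D.ξ_nonpos_of_mem_closure (D.exit_mem_closure hx)) ?_
  have hm : D.exitT x v ∈ closure {τ : ℝ | 0 ≤ τ ∧ x - τ • v ∉ closure D.dom} :=
    csInf_mem_closure (D.exit_nonempty x hv) (D.exit_bddBelow x v)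
  have hcl : IsClosed {s : ℝ | 0 ≤ D.ξ (x - s • v)} :=
    isClosed_le continuous_const (D.continuous_ξ.comp (by fun_prop))
  refine closure_minimal (fun s hs => ?_) hcl hm
  by_contra hneg
  have hlt : D.ξ (x - s • v) < 0 := not_le.mp hneg
  exact hs.2 (subset_closure hlt)

lemma norm_nrm (D : BDomain) {x : V3} (hx : x ∈ D.bdry) : ‖D.nrm x‖ = 1 := by
  have h := norm_ne_zero_iff.mpr (D.grad_ne x hx)
  rw [nrm, norm_smul, norm_inv, norm_norm, inv_mul_cancel₀ h]

/-- A particle leaving the boundary backwards with velocity `u`, `n·u > 0`, stays inside `Ω` for a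
time at least `c (n·u)/|u|²`. By the mean value theorem,
`ξ(x - τu) ≤ τ (-|∇ξ(x)| (n·u) + L τ |u|²)`, where `L` is a local Lipschitz constant of `Dξ` and
`|∇ξ|` is bounded below on the boundary. No convexity is needed. -/
lemma exists_exitT_ge (D : BDomain) :
    ∃ c : ℝ, 0 < c ∧ ∀ x ∈ closure D.dom, x ∈ D.bdry → ∀ u : V3, 0 < ⟪D.nrm x, u⟫ →
      c * ⟪D.nrm x, u⟫ / ‖u‖ ^ 2 ≤ D.exitT x u := by
  have hdiff : Differentiable ℝ D.ξ := D.smooth.differentiable (by simp)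
  have hgc : Continuous (fderiv ℝ D.ξ) := D.smooth.continuous_fderiv (by simp)
  have hgrad : ∀ x, ‖gradient D.ξ x‖ = ‖fderiv ℝ D.ξ x‖ := fun x => by simp [gradient]
  -- a positive lower bound for `|∇ξ|` on the compact boundary
  obtain ⟨m, hm, hmle⟩ : ∃ m : ℝ, 0 < m ∧
      ∀ x ∈ closure D.dom, x ∈ D.bdry → m ≤ ‖gradient D.ξ x‖ := by
    have hK : IsCompact (closure D.dom ∩ D.bdry) :=
      (Metric.isCompact_of_isClosed_isBounded isClosed_closure D.bounded.closure).inter_right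
        (isClosed_eq D.continuous_ξ continuous_const)
    obtain ⟨m, hm, h⟩ := hK.exists_forall_le' (f := fun x => ‖fderiv ℝ D.ξ x‖)
      hgc.norm.continuousOn (a := 0) (fun x hx => by
        rw [← hgrad]; exact norm_pos_iff.mpr (D.grad_ne x hx.2))
    exact ⟨m, hm, fun x h1 h2 => by rw [hgrad]; exact h x ⟨h1, h2⟩⟩
  obtain ⟨R, hR⟩ := D.bounded.closure.exists_norm_le
  obtain ⟨L, hL⟩ : ∃ L, LipschitzOnWith L (fderiv ℝ D.ξ) (Metric.closedBall 0 (R + 1)) := by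
    have h1 : ContDiff ℝ 1 (fderiv ℝ D.ξ) := D.smooth.fderiv_right (by
      norm_num
      exact WithTop.coe_le_coe.mpr le_top)
    exact h1.locallyLipschitz.locallyLipschitzOn.exists_lipschitzOnWith_of_compact
      (isCompact_closedBall _ _)
  refine ⟨min 1 (m / (L + 1)), by positivity, fun x hx hxb u hu => ?_⟩
  set c := min 1 (m / ((L : ℝ) + 1)) with hc
  have hu0 : u ≠ 0 := by rintro rfl; simp at hu
  have hup : 0 < ‖u‖ := norm_pos_iff.mpr hu0
  set a := ⟪D.nrm x, u⟫ with ha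
  have hau : a ≤ ‖u‖ := by
    have := real_inner_le_norm (D.nrm x) u
    rwa [D.norm_nrm hxb, one_mul] at this
  have hg0 : 0 < ‖gradient D.ξ x‖ := norm_pos_iff.mpr (D.grad_ne x hxb)
  have hDa : fderiv ℝ D.ξ x u = ‖gradient D.ξ x‖ * a := by
    rw [ha, nrm, real_inner_smul_left, mul_inv_cancel_left₀ hg0.ne']
    simp [gradient]
  refine le_csInf (D.exit_nonempty x hu0) fun τ hτ => ?_
  by_contra hlt
  rw [not_le] at hlt
  apply hτ.2
  rcases hτ.1.eq_or_lt with h0 | hτp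
  · rw [← h0]; simpa using hx
  apply subset_closure
  change D.ξ (x - τ • u) < 0
  have hτu : τ * ‖u‖ ^ 2 < c * a := by rwa [lt_div_iff₀ (by positivity)] at hlt
  have hτ1 : τ * ‖u‖ ≤ 1 := by
    have h1 : c * a ≤ 1 * ‖u‖ := mul_le_mul (min_le_left _ _) hau hu.le zero_le_one
    have h2 : τ * ‖u‖ * ‖u‖ < 1 * ‖u‖ := by nlinarith
    exact (lt_of_mul_lt_mul_right h2 hup.le).le
  have hder : ∀ s : ℝ, HasDerivAt (fun s : ℝ => D.ξ (x - s • u))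
      (fderiv ℝ D.ξ (x - s • u) (-u)) s := by
    intro s
    have h1 : HasDerivAt (fun s : ℝ => x - s • u) (-u) s := by
      simpa using ((hasDerivAt_id s).smul_const u).const_sub x
    exact (hdiff _).hasFDerivAt.comp_hasDerivAt s h1
  obtain ⟨s, hs, hslope⟩ := exists_hasDerivAt_eq_slope (fun s : ℝ => D.ξ (x - s • u)) _ hτp
    (fun s _ => (hder s).continuousAt.continuousWithinAt) (fun s _ => hder s)
  have hx0 : D.ξ x = 0 := hxb
  simp only [zero_smul, sub_zero, hx0] at hslope
  rw [eq_div_iff hτp.ne'] at hslope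
  rw [← hslope]
  refine mul_neg_of_neg_of_pos ?_ hτp
  have hxn := hR x hx
  have hsu : ‖s • u‖ ≤ 1 := by
    rw [norm_smul, Real.norm_of_nonneg hs.1.le]
    exact (mul_le_mul_of_nonneg_right hs.2.le hup.le).trans hτ1
  have hlip := hL.dist_le_mul (x - s • u) (by
      rw [mem_closedBall_zero_iff]
      linarith [norm_sub_le x (s • u)]) x (by
      rw [mem_closedBall_zero_iff]; linarith)
  rw [dist_eq_norm, dist_eq_norm, sub_sub_cancel_left, norm_neg, norm_smul,
    Real.norm_of_nonneg hs.1.le] at hlip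
  have hop := (fderiv ℝ D.ξ (x - s • u) - fderiv ℝ D.ξ x).le_opNorm u
  rw [sub_apply, hDa, Real.norm_eq_abs] at hop
  have hop' := (abs_le.mp (hop.trans (mul_le_mul_of_nonneg_right hlip hup.le))).1
  rw [map_neg]
  have hma : m * a ≤ ‖gradient D.ξ x‖ * a :=
    mul_le_mul_of_nonneg_right (hmle x hx hxb) hu.le
  have hL0 : (0 : ℝ) ≤ L := L.2
  have h1 : (L : ℝ) * (s * ‖u‖) * ‖u‖ ≤ L * (τ * ‖u‖ ^ 2) := by
    have : s * ‖u‖ ^ 2 ≤ τ * ‖u‖ ^ 2 := mul_le_mul_of_nonneg_right hs.2.le (by positivity)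
    nlinarith
  have h2 : (L : ℝ) * (τ * ‖u‖ ^ 2) < m * a := by
    have hcm : c * (L + 1) ≤ m := by
      have := min_le_right 1 (m / ((L : ℝ) + 1))
      rwa [← hc, le_div_iff₀ (by positivity)] at this
    have : 0 ≤ τ * ‖u‖ ^ 2 := by positivity
    calc (L : ℝ) * (τ * ‖u‖ ^ 2) ≤ L * (c * a) := mul_le_mul_of_nonneg_left hτu.le hL0
      _ < (L + 1) * (c * a) := by
          have : 0 < c * a := this.trans_lt hτu
          linarith
      _ = c * (L + 1) * a := by ring
      _ ≤ m * a := mul_le_mul_of_nonneg_right hcm hu.le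
  linarith

end BDomain

/-- Exponential Markov inequality along the cycles: since `1_{t_k > -M} ≤ e^{M + t_k}`, each of the
`j` remaining reflections contributes a factor `ρ < 1`. -/
lemma exists_cycInt_le (D : BDomain) :
    ∃ ρ : ℝ, 0 < ρ ∧ ρ < 1 ∧ ∀ (M : ℝ) (j : ℕ) (t : ℝ), ∀ x ∈ closure D.dom, ∀ v : V3, v ≠ 0 →
      cycInt D (fun s => if -M < s.1 - D.exitT s.2.1 s.2.2 then 1 else 0) j (t, x, v)
        ≤ ENNReal.ofReal (Real.exp (M + (t - D.exitT x v)) * ρ ^ j) := by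
  obtain ⟨c, hc, hexit⟩ := D.exists_exitT_ge
  obtain ⟨ρ, hρ0, hρ1, hρ⟩ := exists_laplace_factor c hc
  refine ⟨ρ, hρ0, hρ1, fun M j => ?_⟩
  induction j with
  | zero =>
    intro t x hx v hv
    simp only [cycInt, pow_zero, mul_one]
    split_ifs with h
    · rw [ENNReal.one_le_ofReal]
      exact Real.one_le_exp (by linarith)
    · exact zero_le
  | succ j ih =>
    intro t x hx v hv
    simp only [cycInt]
    set t' := t - D.exitT x v
    set x' := x - D.exitT x v • v
    have hx' : x' ∈ closure D.dom := D.exit_mem_closure hx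
    have hxb : x' ∈ D.bdry := D.exit_mem_bdry hx hv
    have hs : MeasurableSet {u : V3 | 0 < ⟪D.nrm x', u⟫} :=
      measurableSet_lt measurable_const (by fun_prop)
    have hgm : Measurable gm := by unfold gm; fun_prop
    have hdens : Measurable fun u : V3 => ENNReal.ofReal (gm u * |⟪D.nrm x', u⟫|) := by
      fun_prop
    set A : ℝ≥0∞ := ENNReal.ofReal (Real.exp (M + t') * ρ ^ j)
    have hbound : ∀ᵐ u ∂(sigmaM D x'),
        cycInt D (fun s => if -M < s.1 - D.exitT s.2.1 s.2.2 then 1 else 0) j (t', x', u)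
          ≤ A * ENNReal.ofReal (Real.exp (-(c * ⟪D.nrm x', u⟫ / ‖u‖ ^ 2))) := by
      have hac : sigmaM D x' ≪ (volume : Measure V3).restrict {u : V3 | 0 < ⟪D.nrm x', u⟫} :=
        withDensity_absolutelyContinuous _ _
      refine hac.ae_le ((ae_restrict_iff' hs).mpr (Filter.Eventually.of_forall fun u hu => ?_))
      have hu0 : u ≠ 0 := by rintro rfl; simp at hu
      refine (ih t' x' hx' u hu0).trans ?_
      rw [← ENNReal.ofReal_mul (by positivity)]
      refine ENNReal.ofReal_le_ofReal ?_
      rw [mul_right_comm, ← Real.exp_add]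
      refine mul_le_mul_of_nonneg_right (Real.exp_le_exp.mpr ?_) (by positivity)
      linarith [hexit x' hx' hxb u hu]
    refine (lintegral_mono_ae hbound).trans ?_
    rw [lintegral_const_mul _ (by fun_prop), sigmaM,
      lintegral_withDensity_eq_lintegral_mul _ hdens (by fun_prop), pow_succ, ← mul_assoc,
      ENNReal.ofReal_mul (by positivity)]
    exact mul_le_mul_right (hρ _ (D.norm_nrm hxb)) A

/-! ### The smallness estimate -/

/-- Smallness of the set of velocity cycles not reaching far back in time (Lemma 2.6):
with `k = ⌈Ĉ₁ (nT)^{5/4}⌉` bounces, the `dσ`-measure of the set of velocity cycles with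
`t_k > -nT` is at most `(1/2)^{Ĉ₂ (nT)^{5/4}}`. -/
theorem velocity_cycle_measure_smallness (D : BDomain) (T : ℝ) (hT : 0 < T) :
    ∃ C₁ > (0 : ℝ), ∃ C₂ > (0 : ℝ), ∃ n₀ : ℕ, ∀ n : ℕ, n₀ ≤ n →
      ∀ t : ℝ, t ∈ Set.Icc (0 : ℝ) T → ∀ x ∈ closure D.dom, ∀ v : V3, v ≠ 0 →
        cycInt D
            (fun s => if -((n : ℝ) * T) < s.1 - D.exitT s.2.1 s.2.2 then 1 else 0)
            (⌈C₁ * ((n : ℝ) * T) ^ ((5 : ℝ) / 4)⌉₊ - 1) (t, x, v)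
          ≤ ENNReal.ofReal ((1 / 2 : ℝ) ^ (C₂ * ((n : ℝ) * T) ^ ((5 : ℝ) / 4))) := by
  obtain ⟨ρ, hρ0, hρ1, hρ⟩ := exists_cycInt_le D
  set a := -Real.log ρ with ha
  have hapos : 0 < a := by have := Real.log_neg hρ0 hρ1; linarith
  have hl2 : 0 < Real.log 2 := Real.log_pos (by norm_num)
  refine ⟨1, one_pos, a / (2 * Real.log 2), by positivity, ?_⟩
  have htend : Filter.Tendsto (fun n : ℕ => (n : ℝ) * T) Filter.atTop Filter.atTop :=
    tendsto_natCast_atTop_atTop.atTop_mul_const hT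
  have hpow : Filter.Tendsto (fun n : ℕ => ((n : ℝ) * T) ^ ((1 : ℝ) / 4)) Filter.atTop
      Filter.atTop := (tendsto_rpow_atTop (by norm_num)).comp htend
  obtain ⟨n₀, hn₀⟩ := Filter.eventually_atTop.mp ((htend.eventually_ge_atTop 1).and
    (hpow.eventually_ge_atTop (2 * (1 + T + a) / a)))
  refine ⟨n₀, fun n hn t ht x hx v hv => ?_⟩
  obtain ⟨h1, h2⟩ := hn₀ n hn
  refine (hρ _ _ t x hx v hv).trans (ENNReal.ofReal_le_ofReal ?_)
  set τ := (n : ℝ) * T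
  set y := τ ^ ((5 : ℝ) / 4) with hy
  set k := ⌈1 * y⌉₊ - 1 with hk
  have hky : y - 1 ≤ (k : ℝ) := by
    have e1 : y ≤ (⌈1 * y⌉₊ : ℝ) := by simpa using Nat.le_ceil (1 * y)
    have e2 : ⌈1 * y⌉₊ ≤ k + 1 := by omega
    have e3 : (⌈1 * y⌉₊ : ℝ) ≤ (k : ℝ) + 1 := by exact_mod_cast e2
    linarith
  have hyτ : y = τ * τ ^ ((1 : ℝ) / 4) := by
    rw [hy, show (5 : ℝ) / 4 = 1 + 1 / 4 by norm_num, Real.rpow_add (by linarith), Real.rpow_one]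
  -- the linear growth in `τ = nT` is absorbed by half of the decay exponent `a τ^{5/4}`
  have hmain : τ + T + a ≤ a / 2 * y := by
    have e1 : 1 + T + a ≤ a / 2 * τ ^ ((1 : ℝ) / 4) := by
      rw [div_le_iff₀ hapos] at h2
      linarith
    calc τ + T + a ≤ τ * (1 + T + a) := by nlinarith
      _ ≤ τ * (a / 2 * τ ^ ((1 : ℝ) / 4)) := mul_le_mul_of_nonneg_left e1 (by linarith)
      _ = a / 2 * y := by rw [hyτ]; ring
  have hρk : ρ ^ k = Real.exp (-(a * k)) := by
    rw [ha, neg_mul, neg_neg, mul_comm, Real.exp_nat_mul, Real.exp_log hρ0]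
  have hrhs : (1 / 2 : ℝ) ^ (a / (2 * Real.log 2) * y) = Real.exp (-(a / 2 * y)) := by
    rw [Real.rpow_def_of_pos (by norm_num), one_div, Real.log_inv]
    congr 1
    field_simp
  rw [hρk, hrhs, ← Real.exp_add]
  refine Real.exp_le_exp.mpr ?_
  have hak : a * (y - 1) ≤ a * k := mul_le_mul_of_nonneg_left hky hapos.le
  linarith [ht.2, D.exitT_nonneg x v]
end
end

section
/- Weighted L∞ bound for the nonlinear collision term (estimate underlying (3.3.4)). Let −3 < γ ≤ 1, 0 ≤ q < 1/8 and β > max{3, 3−γ}. There exists a constant C > 0 such that for all measurable f, g : ℝ³ → ℝ with ‖w f‖_{L∞(ℝ³)}, ‖w g‖_{L∞(ℝ³)} < ∞, the bilinear term Γ(f,g) satisfies sup_{v ∈ ℝ³} ν(v)^{−1} w(v) |Γ(f,g)(v)| ≤ C ‖w f‖_{L∞} ‖w g‖_{L∞}. -/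
/-!
Since energy is conserved in a collision, `√μ(u') √μ(v') = √μ(u) √μ(v)`, and the weight satisfies
`w(v) ≤ w(u') w(v')` because `(1 + |x|²)(1 + |y|²) ≥ 1 + |x|² + |y|²` and `q ≥ 0`; similarly
`w(v) ≤ w(u) w(v)`. Hence gain and loss terms are both dominated pointwise (`bracket_bound`), and
`w(v) |Γ(f,g)(v)| ≤ 2 ‖w f‖ ‖w g‖ ∫∫ B(v - u, ω) √μ(u) dω du`.

The surface measure on the sphere is rotation invariant (`measurePreserving_sphMap`), so the
angular integral of `b` is a constant `S` independent of `v - u`. It factors out both of the last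
integral and of `ν(v)`. If `S = 0` then `ν = 0` and, with `0⁻¹ = 0`, nothing remains to be shown.
Otherwise the estimate reduces to comparing `∫ |v - u|^γ e^{-|u|²/4} du` with
`∫ |v - u|^γ e^{-|u|²/2} du`, both of size `(1 + |v|)^γ`: the upper bound for the former is
`moment_upper` (a Peetre-type inequality and local integrability of `|x|^γ`, which uses `γ > -3`),
the lower bound for the latter is `moment_lower` (averaging over `u` and `-u`).
-/

noncomputable section

open MeasureTheory Real Set
open scoped ENNReal RealInnerProductSpace

/-! ### Rotation invariance of the angular integral -/

/-- The linear isometry `R` restricted to the unit sphere. -/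
def sphMap (R : V3 ≃ₗᵢ[ℝ] V3) (ω : Sph) : Sph :=
  ⟨R ω, by simp⟩

lemma measurable_sphMap (R : V3 ≃ₗᵢ[ℝ] V3) : Measurable (sphMap R) :=
  ((R.continuous.comp continuous_subtype_val).subtype_mk _).measurable

open scoped Pointwise in
/-- The surface measure is rotation invariant: the cone over the preimage of `s` is the preimage
of the cone over `s`, and Lebesgue measure is invariant under linear isometries. -/
lemma measurePreserving_sphMap (R : V3 ≃ₗᵢ[ℝ] V3) :
    MeasurePreserving (sphMap R) sphM sphM := by
  refine ⟨measurable_sphMap R, ?_⟩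
  ext s hs
  rw [Measure.map_apply (measurable_sphMap R) hs, sphM,
    Measure.toSphere_apply' _ (measurable_sphMap R hs), Measure.toSphere_apply' _ hs]
  congr 1
  have hcone : Ioo (0 : ℝ) 1 • ((↑) '' (sphMap R ⁻¹' s) : Set V3)
      = R ⁻¹' (Ioo (0 : ℝ) 1 • ((↑) '' s : Set V3)) := by
    ext x
    simp only [Set.mem_smul, Set.mem_image, Set.mem_preimage]
    constructor
    · rintro ⟨r, hr, _, ⟨ω, hω, rfl⟩, rfl⟩
      exact ⟨r, hr, R ω, ⟨sphMap R ω, hω, rfl⟩, by simp⟩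
    · rintro ⟨r, hr, _, ⟨ω, hω, rfl⟩, h⟩
      refine ⟨r, hr, R.symm ω, ⟨sphMap R.symm ω, ?_, rfl⟩, ?_⟩
      · have : sphMap R (sphMap R.symm ω) = ω := by
          ext1; simp [sphMap]
        rwa [this]
      · rw [← map_smul, h]; simp
  rw [hcone]
  exact R.measurePreserving.measure_preimage_equiv (f := R.toMeasurableEquiv) _

/-- The angular integral of the kernel does not depend on the relative velocity `z ≠ 0`. -/
lemma exists_angular_const {b : ℝ → ℝ} (hb0 : ∀ s, 0 ≤ b s) :
    ∃ S : ℝ, 0 ≤ S ∧ ∀ z : V3, z ≠ 0 → ∫ ω : Sph, b (⟪z, (ω : V3)⟫ / ‖z‖) ∂sphM = S := by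
  obtain ⟨e, he⟩ : ∃ e : V3, ‖e‖ = 1 := exists_norm_eq V3 zero_le_one
  refine ⟨∫ ω : Sph, b ⟪e, (ω : V3)⟫ ∂sphM, integral_nonneg fun _ => hb0 _, fun z hz => ?_⟩
  have hz' : ‖z‖ ≠ 0 := norm_ne_zero_iff.2 hz
  let n : V3 := ‖z‖⁻¹ • z
  have hn : ‖e‖ = ‖n‖ := by simp [n, norm_smul, he, hz']
  -- a reflection carries `e` to `z / ‖z‖`
  let R : V3 ≃ₗᵢ[ℝ] V3 := (ℝ ∙ (e - n))ᗮ.reflection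
  have hR : R e = n := Submodule.reflection_sub hn
  have hemb : MeasurableEmbedding (sphMap R) := by
    refine (measurable_sphMap R).measurableEmbedding fun x y hxy => ?_
    have := congrArg Subtype.val hxy
    exact Subtype.ext (R.injective this)
  rw [← (measurePreserving_sphMap R).integral_comp hemb]
  refine integral_congr_ae (.of_forall fun ω => ?_)
  have h1 : ⟪z, ((sphMap R ω : Sph) : V3)⟫ / ‖z‖ = ⟪n, R ω⟫ := by
    simp only [n, real_inner_smul_left, sphMap]
    field_simp
  simp only [h1, ← hR, LinearIsometryEquiv.inner_map_map]

/-! ### Moments of Gaussians against `|v - u|^γ` -/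

lemma integrable_gauss {a : ℝ} (ha : 0 < a) :
    Integrable (fun u : V3 => Real.exp (-a * ‖u‖ ^ 2)) := by
  have h := (GaussianFourier.integrable_cexp_neg_mul_sq_norm_add (V := V3) (b := (a : ℂ))
    (by simpa using ha) 0 0).norm
  refine h.congr (.of_forall fun u => ?_)
  simp only [Complex.norm_exp]
  congr 1
  simp [← Complex.ofReal_pow, ← Complex.ofReal_mul]

/-- The singular part of `|x|^γ`, cut off to the unit ball. -/
def kpart (γ : ℝ) : V3 → ℝ := (Metric.ball (0 : V3) 1).indicator fun x => ‖x‖ ^ γ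

lemma kpart_nonneg (γ : ℝ) (x : V3) : 0 ≤ kpart γ x :=
  Set.indicator_nonneg (fun _ _ => by positivity) x

lemma measurable_norm_rpow (γ : ℝ) : Measurable fun x : V3 => ‖x‖ ^ γ := by fun_prop

lemma integrable_kpart {γ : ℝ} (hγ : -3 < γ) : Integrable (kpart γ) := by
  rw [kpart, integrable_indicator_iff Metric.isOpen_ball.measurableSet]
  refine integrableOn_ball_of_norm_le_rpow (α := -γ) (C := 1) (by simp) (by simp; linarith) ?_
    (measurable_norm_rpow γ).aestronglyMeasurable
  refine .of_forall fun x => ?_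
  rw [Real.norm_of_nonneg (by positivity)]
  simp

/-- Peetre-type inequality: up to the local singularity `kpart`, `|v - u|^γ` is controlled by
`(1 + |v|)^γ` at the price of a polynomial weight in `u`. -/
lemma peetre {γ : ℝ} (h1 : -3 < γ) (h2 : γ ≤ 1) (v u : V3) :
    ‖v - u‖ ^ γ ≤ (1 + ‖v‖) ^ γ * (8 * (1 + ‖u‖) ^ (3 : ℝ) * (1 + kpart γ (v - u))) := by
  have hk := kpart_nonneg γ (v - u)
  have hv := norm_nonneg v
  have hu := norm_nonneg u
  have hu1 : 1 ≤ (1 + ‖u‖) ^ (3 : ℝ) := Real.one_le_rpow (by linarith) (by norm_num)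
  rcases le_or_gt 0 γ with hγ | hγ
  · have htri : ‖v - u‖ ≤ (1 + ‖v‖) * (1 + ‖u‖) := by
      nlinarith [norm_sub_le v u, mul_nonneg hv hu]
    calc ‖v - u‖ ^ γ ≤ ((1 + ‖v‖) * (1 + ‖u‖)) ^ γ := by gcongr
      _ = (1 + ‖v‖) ^ γ * (1 + ‖u‖) ^ γ := Real.mul_rpow (by positivity) (by positivity)
      _ ≤ _ := by
        gcongr
        have : (1 + ‖u‖) ^ γ ≤ (1 + ‖u‖) ^ (3 : ℝ) :=
          Real.rpow_le_rpow_of_exponent_le (by linarith) (by linarith)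
        nlinarith [mul_nonneg (zero_le_one.trans hu1) hk]
  · rcases eq_or_ne (v - u) 0 with h0 | h0
    · rw [h0, norm_zero, Real.zero_rpow hγ.ne]
      have := kpart_nonneg γ 0
      positivity
    have hr : 0 < ‖v - u‖ := norm_pos_iff.2 h0
    set r := ‖v - u‖ with hrdef
    have htri : 1 + ‖v‖ ≤ (1 + r) * (1 + ‖u‖) := by
      have : ‖v‖ ≤ r + ‖u‖ := by
        simpa [hrdef] using norm_add_le (v - u) u
      nlinarith [mul_nonneg hr.le hu]
    have hA : ((1 + r) * (1 + ‖u‖)) ^ γ ≤ (1 + ‖v‖) ^ γ :=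
      Real.rpow_le_rpow_of_nonpos (by positivity) htri hγ.le
    rw [Real.mul_rpow (by positivity) (by positivity)] at hA
    have h8 : (1 : ℝ) ≤ 8 * 2 ^ γ := by
      have : (2 : ℝ) ^ (-3 : ℝ) ≤ 2 ^ γ :=
        Real.rpow_le_rpow_of_exponent_le (by norm_num) h1.le
      have h3 : (2 : ℝ) ^ (-3 : ℝ) = 1 / 8 := by
        rw [Real.rpow_neg (by norm_num)]; norm_num
      rw [h3] at this
      linarith
    have hB : r ^ γ ≤ 8 * (1 + r) ^ γ * (1 + kpart γ (v - u)) := by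
      rcases lt_or_ge r 1 with hr1 | hr1
      · have hkp : kpart γ (v - u) = r ^ γ := by
          rw [kpart, Set.indicator_of_mem (by simpa [hrdef] using hr1)]
        have : (2 : ℝ) ^ γ ≤ (1 + r) ^ γ :=
          Real.rpow_le_rpow_of_nonpos (by positivity) (by linarith) hγ.le
        rw [hkp]
        nlinarith [Real.rpow_pos_of_pos hr γ]
      · have : (2 * r) ^ γ ≤ (1 + r) ^ γ :=
          Real.rpow_le_rpow_of_nonpos (by positivity) (by linarith) hγ.le
        rw [Real.mul_rpow (by norm_num) hr.le] at this
        have hp := Real.rpow_pos_of_pos hr γ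
        have hp' : 0 < (1 + r) ^ γ := by positivity
        nlinarith [mul_nonneg hp'.le hk]
    have hC : 1 ≤ (1 + ‖u‖) ^ γ * (1 + ‖u‖) ^ (3 : ℝ) := by
      rw [← Real.rpow_add (by positivity)]
      exact Real.one_le_rpow (by linarith) (by linarith)
    have hp' : 0 < (1 + r) ^ γ := by positivity
    calc r ^ γ ≤ 8 * (1 + r) ^ γ * (1 + kpart γ (v - u)) := hB
      _ ≤ 8 * (1 + r) ^ γ * (1 + kpart γ (v - u)) *
          ((1 + ‖u‖) ^ γ * (1 + ‖u‖) ^ (3 : ℝ)) := le_mul_of_one_le_right (by positivity) hC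
      _ = ((1 + r) ^ γ * (1 + ‖u‖) ^ γ) *
          (8 * (1 + ‖u‖) ^ (3 : ℝ) * (1 + kpart γ (v - u))) := by ring
      _ ≤ _ := by gcongr

lemma poly_gauss_le {a : ℝ} (ha : 0 < a) {r : ℝ} (hr : 0 ≤ r) :
    (1 + r) ^ (3 : ℝ) * Real.exp (-a * r ^ 2)
      ≤ 6 * Real.exp (1 + 1 / (2 * a)) * Real.exp (-(a / 2) * r ^ 2) := by
  have h := Real.pow_div_factorial_le_exp (1 + r) (by linarith) 3
  have h' : (1 + r) ^ (3 : ℝ) ≤ 6 * Real.exp (1 + r) := by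
    have : (1 + r) ^ (3 : ℝ) = (1 + r) ^ (3 : ℕ) := by
      rw [← Real.rpow_natCast]; norm_num
    rw [this]
    norm_num [Nat.factorial] at h
    linarith
  calc _ ≤ 6 * Real.exp (1 + r) * Real.exp (-a * r ^ 2) := by gcongr
    _ = 6 * Real.exp (1 + r + -a * r ^ 2) := by rw [mul_assoc, ← Real.exp_add]
    _ ≤ 6 * Real.exp (1 + 1 / (2 * a) + -(a / 2) * r ^ 2) := by
      gcongr 6 * Real.exp ?_
      have : 1 / (2 * a) + -(a / 2) * r ^ 2 - (r + -a * r ^ 2) = (a * r - 1) ^ 2 / (2 * a) := by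
        field_simp; ring
      have : 0 ≤ (a * r - 1) ^ 2 / (2 * a) := by positivity
      linarith
    _ = _ := by rw [mul_assoc, ← Real.exp_add]

lemma moment_dom {γ : ℝ} (h1 : -3 < γ) (h2 : γ ≤ 1) {a : ℝ} (ha : 0 < a) (v u : V3) :
    ‖v - u‖ ^ γ * Real.exp (-a * ‖u‖ ^ 2) ≤
      ((1 + ‖v‖) ^ γ * (48 * Real.exp (1 + 1 / (2 * a)))) *
        (Real.exp (-(a / 2) * ‖u‖ ^ 2) + kpart γ (v - u)) := by
  have hk := kpart_nonneg γ (v - u)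
  have hp := poly_gauss_le ha (norm_nonneg u)
  have hE : Real.exp (-(a / 2) * ‖u‖ ^ 2) ≤ 1 := Real.exp_le_one_iff.2 (by
    nlinarith [sq_nonneg ‖u‖])
  calc _ ≤ (1 + ‖v‖) ^ γ * (8 * (1 + ‖u‖) ^ (3 : ℝ) * (1 + kpart γ (v - u))) *
        Real.exp (-a * ‖u‖ ^ 2) := by
        gcongr; exact peetre h1 h2 v u
    _ = (1 + ‖v‖) ^ γ * 8 * (1 + kpart γ (v - u)) *
        ((1 + ‖u‖) ^ (3 : ℝ) * Real.exp (-a * ‖u‖ ^ 2)) := by ring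
    _ ≤ (1 + ‖v‖) ^ γ * 8 * (1 + kpart γ (v - u)) *
        (6 * Real.exp (1 + 1 / (2 * a)) * Real.exp (-(a / 2) * ‖u‖ ^ 2)) := by gcongr
    _ = ((1 + ‖v‖) ^ γ * (48 * Real.exp (1 + 1 / (2 * a)))) *
        (Real.exp (-(a / 2) * ‖u‖ ^ 2) + Real.exp (-(a / 2) * ‖u‖ ^ 2) * kpart γ (v - u)) := by
        ring
    _ ≤ _ := by
        gcongr
        exact mul_le_of_le_one_left hk hE

lemma integrable_dom {γ : ℝ} (h1 : -3 < γ) {a : ℝ} (ha : 0 < a) (v : V3) :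
    Integrable fun u : V3 => Real.exp (-(a / 2) * ‖u‖ ^ 2) + kpart γ (v - u) :=
  (integrable_gauss (half_pos ha)).add ((integrable_kpart h1).comp_sub_left v)

lemma integrable_moment {γ : ℝ} (h1 : -3 < γ) (h2 : γ ≤ 1) {a : ℝ} (ha : 0 < a) (v : V3) :
    Integrable fun u : V3 => ‖v - u‖ ^ γ * Real.exp (-a * ‖u‖ ^ 2) := by
  refine ((integrable_dom h1 ha v).const_mul
    ((1 + ‖v‖) ^ γ * (48 * Real.exp (1 + 1 / (2 * a))))).mono' ?_ (.of_forall fun u => ?_)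
  · refine Measurable.aestronglyMeasurable ?_
    exact ((measurable_norm_rpow γ).comp (measurable_const.sub measurable_id)).mul (by fun_prop)
  · rw [Real.norm_of_nonneg (by positivity)]
    exact moment_dom h1 h2 ha v u

lemma moment_upper {γ : ℝ} (h1 : -3 < γ) (h2 : γ ≤ 1) {a : ℝ} (ha : 0 < a) :
    ∃ C : ℝ, 0 < C ∧ ∀ v : V3,
      ∫ u : V3, ‖v - u‖ ^ γ * Real.exp (-a * ‖u‖ ^ 2) ≤ C * (1 + ‖v‖) ^ γ := by
  set I := (∫ u : V3, Real.exp (-(a / 2) * ‖u‖ ^ 2)) + ∫ x : V3, kpart γ x with hI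
  have hI0 : 0 ≤ I := add_nonneg (integral_nonneg fun _ => by positivity)
    (integral_nonneg fun _ => kpart_nonneg _ _)
  refine ⟨48 * Real.exp (1 + 1 / (2 * a)) * (I + 1), by positivity, fun v => ?_⟩
  calc _ ≤ ∫ u : V3, ((1 + ‖v‖) ^ γ * (48 * Real.exp (1 + 1 / (2 * a)))) *
        (Real.exp (-(a / 2) * ‖u‖ ^ 2) + kpart γ (v - u)) :=
        integral_mono (integrable_moment h1 h2 ha v) ((integrable_dom h1 ha v).const_mul _)
          fun u => moment_dom h1 h2 ha v u
    _ = ((1 + ‖v‖) ^ γ * (48 * Real.exp (1 + 1 / (2 * a)))) * I := by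
        rw [integral_const_mul, integral_add (integrable_gauss (half_pos ha))
          ((integrable_kpart h1).comp_sub_left v), integral_sub_left_eq_self]
    _ ≤ ((1 + ‖v‖) ^ γ * (48 * Real.exp (1 + 1 / (2 * a)))) * (I + 1) := by
        gcongr; linarith
    _ = _ := by ring

/-- Pointwise lower bound for the average of `|v - u|^γ` over `±u`. For `γ ≥ 0` it rests on
`max(|v - u|, |v + u|) ≥ max(|v|, |u|)`. -/
lemma symm_lower {γ : ℝ} (h2 : γ ≤ 1) (v u : V3) (hu : 1 ≤ ‖u‖)
    (hne : v - u ≠ 0) :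
    (1 + ‖v‖) ^ γ * min (1 / 2) ((1 + ‖u‖) ^ γ) ≤ ‖v - u‖ ^ γ + ‖v + u‖ ^ γ := by
  have hv := norm_nonneg v
  have ha : 0 ≤ ‖v - u‖ ^ γ := by positivity
  have hb : 0 ≤ ‖v + u‖ ^ γ := by positivity
  rcases le_or_gt 0 γ with hγ | hγ
  · have hhalf : (1 / 2 : ℝ) ≤ (1 / 2) ^ γ := by
      simpa using Real.rpow_le_rpow_of_exponent_ge (x := 1 / 2) (by norm_num) (by norm_num) h2
    have hM : (1 + ‖v‖) ^ γ * min (1 / 2) ((1 + ‖u‖) ^ γ) ≤ ((1 + ‖v‖) * (1 / 2)) ^ γ := by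
      rw [Real.mul_rpow (by positivity) (by positivity)]
      gcongr
      exact (min_le_left _ _).trans hhalf
    have hv2 : 2 * ‖v‖ ≤ ‖v - u‖ + ‖v + u‖ := by
      have := norm_add_le (v - u) (v + u)
      have e : v - u + (v + u) = (2 : ℝ) • v := by rw [two_smul]; abel
      rw [e, norm_smul] at this
      simpa using this
    have hu2 : 2 * ‖u‖ ≤ ‖v - u‖ + ‖v + u‖ := by
      have := norm_sub_le (v + u) (v - u)
      have e : v + u - (v - u) = (2 : ℝ) • u := by rw [two_smul]; abel
      rw [e, norm_smul] at this
      have h3 : ‖(2 : ℝ)‖ = 2 := by norm_num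
      rw [h3] at this
      linarith
    rcases le_total ‖v - u‖ ‖v + u‖ with h | h
    · have : ((1 + ‖v‖) * (1 / 2)) ^ γ ≤ ‖v + u‖ ^ γ :=
        Real.rpow_le_rpow (by positivity) (by linarith) hγ
      linarith
    · have : ((1 + ‖v‖) * (1 / 2)) ^ γ ≤ ‖v - u‖ ^ γ :=
        Real.rpow_le_rpow (by positivity) (by linarith) hγ
      linarith
  · have hle : ‖v - u‖ ≤ (1 + ‖v‖) * (1 + ‖u‖) := by
      nlinarith [norm_sub_le v u, mul_nonneg hv (norm_nonneg u)]
    have := Real.rpow_le_rpow_of_nonpos (norm_pos_iff.2 hne) hle hγ.le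
    rw [Real.mul_rpow (by positivity) (by positivity)] at this
    have h3 : (1 + ‖v‖) ^ γ * min (1 / 2) ((1 + ‖u‖) ^ γ) ≤ (1 + ‖v‖) ^ γ * (1 + ‖u‖) ^ γ := by
      gcongr
      exact min_le_right _ _
    linarith

/-- The `v`-independent minorant obtained from `symm_lower`. -/
def minorant (γ : ℝ) (u : V3) : ℝ :=
  {x : V3 | 1 ≤ ‖x‖}.indicator
    (fun x => min (1 / 2) ((1 + ‖x‖) ^ γ) * Real.exp (-(1 / 2) * ‖x‖ ^ 2)) u

lemma measurableSet_outer : MeasurableSet {x : V3 | 1 ≤ ‖x‖} :=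
  measurableSet_le measurable_const measurable_norm

lemma minorant_nonneg (γ : ℝ) (u : V3) : 0 ≤ minorant γ u :=
  Set.indicator_nonneg (fun x _ => by positivity) u

lemma integrable_minorant (γ : ℝ) : Integrable (minorant γ) := by
  refine (integrable_gauss (a := 1 / 2) (by norm_num)).mono' ?_ (.of_forall fun u => ?_)
  · refine (Measurable.indicator ?_ measurableSet_outer).aestronglyMeasurable
    fun_prop
  · rw [Real.norm_of_nonneg (minorant_nonneg _ _)]
    refine Set.indicator_le_self' (fun _ _ => by positivity) u |>.trans ?_
    refine mul_le_of_le_one_left (by positivity) ((min_le_left _ _).trans (by norm_num))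

lemma integral_minorant_pos (γ : ℝ) : 0 < ∫ u, minorant γ u := by
  rw [integral_pos_iff_support_of_nonneg (minorant_nonneg γ) (integrable_minorant γ)]
  have hsub : {x : V3 | 1 < ‖x‖} ⊆ Function.support (minorant γ) := fun x hx => by
    have hx' : 1 < ‖x‖ := hx
    rw [Function.mem_support, minorant, Set.indicator_of_mem (by exact hx'.le)]
    positivity
  refine lt_of_lt_of_le ?_ (measure_mono hsub)
  obtain ⟨e, he⟩ : ∃ e : V3, ‖e‖ = 2 := exists_norm_eq V3 zero_le_two
  exact (isOpen_lt continuous_const continuous_norm).measure_pos _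
    ⟨e, by simp [he]⟩

lemma moment_lower {γ : ℝ} (h1 : -3 < γ) (h2 : γ ≤ 1) :
    ∃ c : ℝ, 0 < c ∧ ∀ v : V3,
      c * (1 + ‖v‖) ^ γ ≤ ∫ u : V3, ‖v - u‖ ^ γ * Real.exp (-(1 / 2) * ‖u‖ ^ 2) := by
  refine ⟨(∫ u, minorant γ u) / 2, half_pos (integral_minorant_pos γ), fun v => ?_⟩
  have hi := integrable_moment h1 h2 (a := 1 / 2) (by norm_num) v
  have hneg : ∫ u : V3, ‖v + u‖ ^ γ * Real.exp (-(1 / 2) * ‖u‖ ^ 2)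
      = ∫ u : V3, ‖v - u‖ ^ γ * Real.exp (-(1 / 2) * ‖u‖ ^ 2) := by
    rw [← integral_neg_eq_self]
    simp [sub_eq_add_neg]
  have hi' : Integrable fun u : V3 => ‖v + u‖ ^ γ * Real.exp (-(1 / 2) * ‖u‖ ^ 2) := by
    simpa [sub_eq_add_neg] using hi.comp_neg
  have key : ∫ u : V3, (1 + ‖v‖) ^ γ * minorant γ u ≤
      ∫ u : V3, (‖v - u‖ ^ γ * Real.exp (-(1 / 2) * ‖u‖ ^ 2)
        + ‖v + u‖ ^ γ * Real.exp (-(1 / 2) * ‖u‖ ^ 2)) := by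
    refine integral_mono_ae ((integrable_minorant γ).const_mul _) (hi.add hi') ?_
    have hne : ∀ᵐ u : V3, u ≠ v := by simp [ae_iff]
    filter_upwards [hne] with u hu
    by_cases h : 1 ≤ ‖u‖
    · have := symm_lower h2 v u h (sub_ne_zero.2 hu.symm)
      rw [minorant, Set.indicator_of_mem (by exact h), ← add_mul, ← mul_assoc]
      gcongr
    · rw [minorant, Set.indicator_of_notMem (by exact h), mul_zero]
      positivity
  rw [integral_const_mul, integral_add hi hi', hneg] at key
  linarith

/-! ### Pointwise bounds from the conservation laws -/

lemma gm_pos (v : V3) : 0 < gm v := by unfold gm; positivity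

lemma wgt_pos (q β : ℝ) (v : V3) : 0 < wgt q β v := by unfold wgt; positivity

lemma sqrt_gm (v : V3) :
    Real.sqrt (gm v) = Real.sqrt (2 * π)⁻¹ * Real.exp (-(1 / 4) * ‖v‖ ^ 2) := by
  rw [gm, Real.sqrt_mul (by positivity), Real.sqrt_eq_rpow (Real.exp _), ← Real.exp_mul]
  congr 2
  ring

lemma energy (v u : V3) (ω : Sph) :
    ‖upost v u ω‖ ^ 2 + ‖vpost v u ω‖ ^ 2 = ‖u‖ ^ 2 + ‖v‖ ^ 2 := by
  have hω : ‖(ω : V3)‖ = 1 := by simp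
  rw [upost, vpost, norm_add_sq_real, norm_sub_sq_real, norm_smul, hω, inner_smul_right,
    inner_smul_right, inner_sub_left, Real.norm_eq_abs, mul_one, sq_abs]
  ring

lemma gm_collision (v u : V3) (ω : Sph) :
    Real.sqrt (gm (upost v u ω)) * Real.sqrt (gm (vpost v u ω))
      = Real.sqrt (gm u) * Real.sqrt (gm v) := by
  have key : ∀ x y : V3, Real.sqrt (gm x) * Real.sqrt (gm y)
      = Real.sqrt (2 * π)⁻¹ ^ 2 * Real.exp (-(1 / 4) * (‖x‖ ^ 2 + ‖y‖ ^ 2)) := fun x y => by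
    rw [sqrt_gm, sqrt_gm, mul_add, Real.exp_add]; ring
  rw [key, key, energy]

/-- The weight is submultiplicative with respect to the kinetic energy, since
`(1 + |x|²)(1 + |y|²) ≥ 1 + |x|² + |y|²`. -/
lemma wgt_le_mul {q β : ℝ} (hq : 0 ≤ q) (hβ : 0 ≤ β) {v x y : V3}
    (h : ‖v‖ ^ 2 ≤ ‖x‖ ^ 2 + ‖y‖ ^ 2) : wgt q β v ≤ wgt q β x * wgt q β y := by
  have h1 : 1 + ‖v‖ ^ 2 ≤ (1 + ‖x‖ ^ 2) * (1 + ‖y‖ ^ 2) := by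
    nlinarith [mul_nonneg (sq_nonneg ‖x‖) (sq_nonneg ‖y‖)]
  calc wgt q β v ≤ ((1 + ‖x‖ ^ 2) * (1 + ‖y‖ ^ 2)) ^ (β / 2) *
        Real.exp (q * (‖x‖ ^ 2 + ‖y‖ ^ 2)) := by unfold wgt; gcongr
    _ = _ := by
      rw [Real.mul_rpow (by positivity) (by positivity), mul_add, Real.exp_add]
      unfold wgt; ring

lemma prod_bound {q β : ℝ} (hq : 0 ≤ q) (hβ : 0 ≤ β) {f g : V3 → ℝ} {Mf Mg : ℝ}
    (hf : ∀ v : V3, |wgt q β v * f v| ≤ Mf) (hg : ∀ v : V3, |wgt q β v * g v| ≤ Mg)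
    {v x y : V3} (h : ‖v‖ ^ 2 ≤ ‖x‖ ^ 2 + ‖y‖ ^ 2) :
    |f x * g y| ≤ Mf * Mg / wgt q β v := by
  rw [le_div_iff₀ (wgt_pos q β v)]
  have hM : 0 ≤ Mf := (abs_nonneg _).trans (hf 0)
  calc |f x * g y| * wgt q β v ≤ |f x * g y| * (wgt q β x * wgt q β y) := by
        gcongr; exact wgt_le_mul hq hβ h
    _ = |wgt q β x * f x| * |wgt q β y * g y| := by
        simp only [abs_mul, abs_of_pos (wgt_pos q β _)]; ring
    _ ≤ Mf * Mg := mul_le_mul (hf x) (hg y) (abs_nonneg _) hM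

lemma bracket_bound {q β : ℝ} (hq : 0 ≤ q) (hβ : 0 ≤ β) {f g : V3 → ℝ} {Mf Mg : ℝ}
    (hf : ∀ v : V3, |wgt q β v * f v| ≤ Mf) (hg : ∀ v : V3, |wgt q β v * g v| ≤ Mg)
    (v u : V3) (ω : Sph) :
    |Real.sqrt (gm (upost v u ω)) * f (upost v u ω) *
        (Real.sqrt (gm (vpost v u ω)) * g (vpost v u ω))
      - Real.sqrt (gm u) * f u * (Real.sqrt (gm v) * g v)|
      ≤ Real.sqrt (gm u) * (Real.sqrt (gm v) * (2 * (Mf * Mg / wgt q β v))) := by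
  have e : Real.sqrt (gm (upost v u ω)) * f (upost v u ω) *
        (Real.sqrt (gm (vpost v u ω)) * g (vpost v u ω))
      - Real.sqrt (gm u) * f u * (Real.sqrt (gm v) * g v)
      = (Real.sqrt (gm u) * Real.sqrt (gm v)) *
        (f (upost v u ω) * g (vpost v u ω) - f u * g v) := by
    rw [mul_sub, ← gm_collision v u ω]
    nth_rewrite 2 [gm_collision v u ω]
    ring
  have h1 := prod_bound hq hβ hf hg (v := v) (x := upost v u ω) (y := vpost v u ω)
    (by rw [energy]; nlinarith [sq_nonneg ‖u‖])
  have h2 := prod_bound hq hβ hf hg (v := v) (x := u) (y := v) (by nlinarith [sq_nonneg ‖u‖])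
  rw [e, abs_mul, abs_of_nonneg (by positivity), mul_assoc]
  gcongr
  linarith [abs_sub (f (upost v u ω) * g (vpost v u ω)) (f u * g v)]

/-! ### Factoring out the angular constant -/

lemma inner_integral {γ S : ℝ} {b : ℝ → ℝ}
    (hS : ∀ z : V3, z ≠ 0 → ∫ ω : Sph, b (⟪z, (ω : V3)⟫ / ‖z‖) ∂sphM = S)
    {v u : V3} (hne : u ≠ v) (c : ℝ) :
    ∫ ω : Sph, Bker γ b (v - u) ω * c ∂sphM = ‖v - u‖ ^ γ * S * c := by
  rw [integral_mul_const]
  congr 1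
  simp only [Bker]
  rw [integral_const_mul, hS _ (sub_ne_zero.2 hne.symm)]

lemma nufreq_eq {γ S : ℝ} {b : ℝ → ℝ}
    (hS : ∀ z : V3, z ≠ 0 → ∫ ω : Sph, b (⟪z, (ω : V3)⟫ / ‖z‖) ∂sphM = S) (v : V3) :
    nufreq γ b v
      = S * (2 * π)⁻¹ * ∫ u : V3, ‖v - u‖ ^ γ * Real.exp (-(1 / 2) * ‖u‖ ^ 2) := by
  rw [nufreq, ← integral_const_mul]
  have hne : ∀ᵐ u : V3, u ≠ v := by simp [ae_iff]
  refine integral_congr_ae ?_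
  filter_upwards [hne] with u hu
  rw [inner_integral hS hu, gm]
  have : -‖u‖ ^ 2 / 2 = -(1 / 2) * ‖u‖ ^ 2 := by ring
  rw [this]; ring

lemma integrable_Bker {γ : ℝ} {b : ℝ → ℝ} (hb : KernelOK b) (z : V3) :
    Integrable (fun ω : Sph => Bker γ b z ω) sphM := by
  obtain ⟨hbm, Cb, hCb⟩ := hb
  have hfin : IsFiniteMeasure sphM := by unfold sphM; infer_instance
  have hC0 : 0 ≤ Cb := by simpa using (hCb 1).1.trans (hCb 1).2
  unfold Bker
  refine Integrable.const_mul ?_ _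
  refine (integrable_const (Cb * 1)).mono' ?_ (.of_forall fun ω => ?_)
  · refine (hbm.comp ?_).aestronglyMeasurable
    fun_prop
  · rw [Real.norm_of_nonneg (hCb _).1]
    refine (hCb _).2.trans ?_
    gcongr
    have := abs_real_inner_div_norm_mul_norm_le_one z (ω : V3)
    simpa using this

lemma Γop_bound {γ q β S : ℝ} (h1 : -3 < γ) (h2 : γ ≤ 1) (hq : 0 ≤ q) (hβ : 0 ≤ β)
    {b : ℝ → ℝ} (hb : KernelOK b)
    (hS : ∀ z : V3, z ≠ 0 → ∫ ω : Sph, b (⟪z, (ω : V3)⟫ / ‖z‖) ∂sphM = S)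
    {f g : V3 → ℝ} {Mf Mg : ℝ}
    (hf : ∀ v : V3, |wgt q β v * f v| ≤ Mf) (hg : ∀ v : V3, |wgt q β v * g v| ≤ Mg) (v : V3) :
    wgt q β v * |Γop γ b f g v| ≤ 2 * (Mf * Mg) * (S * Real.sqrt (2 * π)⁻¹ *
      ∫ u : V3, ‖v - u‖ ^ γ * Real.exp (-(1 / 4) * ‖u‖ ^ 2)) := by
  have hb' := hb
  obtain ⟨-, Cb, hCb⟩ := hb
  set D := Real.sqrt (gm v) * (2 * (Mf * Mg / wgt q β v)) with hD
  have hs : 0 < Real.sqrt (gm v) := Real.sqrt_pos.2 (gm_pos v)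
  have hw := wgt_pos q β v
  have hne : ∀ᵐ u : V3, u ≠ v := by simp [ae_iff]
  have hQ : |Qop γ b (fun u => Real.sqrt (gm u) * f u) (fun u => Real.sqrt (gm u) * g u) v|
      ≤ ∫ u : V3, (S * Real.sqrt (2 * π)⁻¹ * D) *
        (‖v - u‖ ^ γ * Real.exp (-(1 / 4) * ‖u‖ ^ 2)) := by
    rw [← Real.norm_eq_abs, Qop]
    refine norm_integral_le_of_norm_le
      ((integrable_moment h1 h2 (a := 1 / 4) (by norm_num) v).const_mul _) ?_
    filter_upwards [hne] with u hu
    have hin : ∫ ω : Sph, Bker γ b (v - u) ω * (Real.sqrt (gm u) * D) ∂sphM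
        = (S * Real.sqrt (2 * π)⁻¹ * D) * (‖v - u‖ ^ γ * Real.exp (-(1 / 4) * ‖u‖ ^ 2)) := by
      rw [inner_integral hS hu, sqrt_gm u]; ring
    rw [← hin]
    refine norm_integral_le_of_norm_le ((integrable_Bker hb' (v - u)).mul_const _)
      (.of_forall fun ω => ?_)
    have hB : 0 ≤ Bker γ b (v - u) ω := mul_nonneg (by positivity) (hCb _).1
    rw [Real.norm_eq_abs, abs_mul, abs_of_nonneg hB]
    exact mul_le_mul_of_nonneg_left (bracket_bound hq hβ hf hg v u ω) hB
  rw [integral_const_mul] at hQ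
  rw [Γop, abs_mul, abs_of_pos (inv_pos.2 hs)]
  refine (mul_le_mul_of_nonneg_left (mul_le_mul_of_nonneg_left hQ (inv_pos.2 hs).le)
    hw.le).trans_eq ?_
  rw [hD]
  field_simp

/-- Weighted `L^∞` bound for the nonlinear collision term (estimate underlying (3.3.4)). -/
theorem nonlinear_collision_weighted_bound (γ q β : ℝ)
    (hγ1 : -3 < γ) (hγ2 : γ ≤ 1) (hq0 : 0 ≤ q) (hq : q < 1 / 8)
    (hβ : max 3 (3 - γ) < β) (b : ℝ → ℝ) (hb : KernelOK b) :
    ∃ C > (0 : ℝ), ∀ f g : V3 → ℝ, Measurable f → Measurable g →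
      ∀ Mf Mg : ℝ, (∀ v : V3, |wgt q β v * f v| ≤ Mf) →
        (∀ v : V3, |wgt q β v * g v| ≤ Mg) →
        ∀ v : V3,
          (nufreq γ b v)⁻¹ * wgt q β v * |Γop γ b f g v| ≤ C * Mf * Mg := by
  have hβ0 : 0 ≤ β := by linarith [le_max_left 3 (3 - γ)]
  obtain ⟨S, hS0, hS⟩ := exists_angular_const (fun s => (hb.2.choose_spec s).1)
  obtain ⟨C, hC, hup⟩ := moment_upper hγ1 hγ2 (a := 1 / 4) (by norm_num)
  obtain ⟨c, hc, hlow⟩ := moment_lower hγ1 hγ2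
  set k := Real.sqrt (2 * π)⁻¹ with hk
  have hk0 : 0 < k := Real.sqrt_pos.2 (by positivity)
  refine ⟨2 * (k * C) / ((2 * π)⁻¹ * c), by positivity, fun f g _ _ Mf Mg hf hg v => ?_⟩
  have hMf : 0 ≤ Mf := (abs_nonneg _).trans (hf 0)
  have hMg : 0 ≤ Mg := (abs_nonneg _).trans (hg 0)
  have hG := Γop_bound hγ1 hγ2 hq0 hβ0 hb hS hf hg v
  have hp : 0 < (1 + ‖v‖) ^ γ := by positivity
  rcases hS0.eq_or_lt with h0 | hSpos
  · -- a kernel with vanishing angular integral gives `ν = 0`, and `0⁻¹ = 0`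
    rw [nufreq_eq hS, ← h0]
    simp only [zero_mul, inv_zero]
    positivity
  have hν : S * (2 * π)⁻¹ * (c * (1 + ‖v‖) ^ γ) ≤ nufreq γ b v := by
    rw [nufreq_eq hS]
    gcongr
    exact hlow v
  have hνpos : 0 < nufreq γ b v := lt_of_lt_of_le (by positivity) hν
  rw [mul_assoc, inv_mul_le_iff₀ hνpos]
  calc _ ≤ 2 * (Mf * Mg) * (S * k * (C * (1 + ‖v‖) ^ γ)) := by
        refine hG.trans ?_
        gcongr
        exact hup v
    _ = (S * (2 * π)⁻¹ * (c * (1 + ‖v‖) ^ γ)) *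
        (2 * (k * C) / ((2 * π)⁻¹ * c) * Mf * Mg) := by field_simp
    _ ≤ _ := by gcongr
end
end
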